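/- (Moment inequality.) Let A ∈ V_{(0,b]}(X) with constant M_A. Then for every x ∈ X with ‖x‖ = 1, ‖f(A)x‖ ≤ −(2·M_A + 1) · f(−‖Ax‖), where for s ≥ 0 one has f(−s) = ∫₀^b (−s)/(t+s) dτ(t) ≤ 0. -/

import Mathlib

open MeasureTheory Set Filter

/-- A bounded operator `A` belongs to `V_{(0,b]}(X)` with constant `M` if every `t ∈ (0,b]`
lies in the resolvent set of `A` and `‖R(t,A)‖ ≤ M/t`. -/
def MemV {X : Type*} [NormedAddCommGroup X] [NormedSpace ℂ X]
    (b M : ℝ) (A : X →L[ℂ] X) : Prop :=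
  ∀ t ∈ Ioc (0 : ℝ) b, (t : ℂ) ∈ resolventSet ℂ A ∧ ‖resolvent A (t : ℂ)‖ ≤ M / t

/-- For `f ∈ ZR(0,b]` with representing measure `τ`, the operator
`f(A) = ∫₀^b A·R(t,A) dτ(t)` (a Bochner integral in operator norm). -/
noncomputable def fOp {X : Type*} [NormedAddCommGroup X] [NormedSpace ℂ X] [CompleteSpace X]
    (τ : Measure ℝ) (b : ℝ) (A : X →L[ℂ] X) : X →L[ℂ] X :=
  ∫ t in Ioc (0 : ℝ) b, A * resolvent A (t : ℂ) ∂τ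

/-! With `s = ‖A x‖`, the commutation `A R(t) = R(t) A` gives `t ‖A R(t) x‖ ≤ M s`, while
`A R(t) = t R(t) - I` gives `‖A R(t) x‖ ≤ M + 1` for `‖x‖ ≤ 1`. Adding the first bound to `s` times
the second yields `‖A R(t) x‖ ≤ (2 M + 1) s / (t + s)`, which is integrated against `τ`. -/

section Resolvent

variable {R 𝓐 : Type*} [CommRing R] [Ring 𝓐] [Algebra R 𝓐] {a : 𝓐} {r : R}

theorem commute_resolvent (hr : r ∈ resolventSet R a) : Commute a (resolvent a r) := by
  rw [spectrum.resolvent_eq hr]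
  exact Commute.units_inv_right ((Algebra.commute_algebraMap_right r a).sub_right (.refl a))

theorem mul_resolvent_eq_smul_sub_one (hr : r ∈ resolventSet R a) :
    a * resolvent a r = r • resolvent a r - 1 := by
  have hinv : (algebraMap R 𝓐 r - a) * resolvent a r = 1 := Ring.mul_inverse_cancel _ hr
  rw [← hinv, sub_mul, Algebra.smul_def, sub_sub_cancel]

end Resolvent

theorem continuousOn_resolvent {𝕜 𝓐 : Type*} [NontriviallyNormedField 𝕜] [NormedRing 𝓐]
    [NormedAlgebra 𝕜 𝓐] [CompleteSpace 𝓐] (a : 𝓐) :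
    ContinuousOn (resolvent a) (resolventSet 𝕜 a) := fun _ hz =>
  (spectrum.hasDerivAt_resolvent_const_left hz).continuousAt.continuousWithinAt

section Pointwise

variable {𝕜 X : Type*} [NontriviallyNormedField 𝕜] [NormedAddCommGroup X] [NormedSpace 𝕜 X]
  {A : X →L[𝕜] X} {z : 𝕜} {M : ℝ}

theorem norm_mul_norm_mul_resolvent_apply_le (hz : z ∈ resolventSet 𝕜 A)
    (hM : ‖z‖ * ‖resolvent A z‖ ≤ M) (x : X) :
    ‖z‖ * ‖(A * resolvent A z) x‖ ≤ M * ‖A x‖ :=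
  calc ‖z‖ * ‖(A * resolvent A z) x‖
      = ‖z‖ * ‖resolvent A z (A x)‖ := by rw [(commute_resolvent hz).eq, mul_apply_eq_comp]
    _ ≤ ‖z‖ * (‖resolvent A z‖ * ‖A x‖) := by gcongr; exact ContinuousLinearMap.le_opNorm _ _
    _ = ‖z‖ * ‖resolvent A z‖ * ‖A x‖ := (mul_assoc _ _ _).symm
    _ ≤ M * ‖A x‖ := by gcongr

theorem norm_mul_resolvent_apply_le (hz : z ∈ resolventSet 𝕜 A)
    (hM : ‖z‖ * ‖resolvent A z‖ ≤ M) (x : X) :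
    ‖(A * resolvent A z) x‖ ≤ (M + 1) * ‖x‖ :=
  calc ‖(A * resolvent A z) x‖
      = ‖(z • resolvent A z) x - x‖ := by rw [mul_resolvent_eq_smul_sub_one hz]; rfl
    _ ≤ ‖(z • resolvent A z) x‖ + ‖x‖ := norm_sub_le _ _
    _ ≤ ‖z • resolvent A z‖ * ‖x‖ + ‖x‖ := by gcongr; exact ContinuousLinearMap.le_opNorm _ _
    _ ≤ M * ‖x‖ + ‖x‖ := by rw [norm_smul]; gcongr
    _ = (M + 1) * ‖x‖ := by ring

theorem norm_mul_resolvent_le (hz : z ∈ resolventSet 𝕜 A) (hM : ‖z‖ * ‖resolvent A z‖ ≤ M) :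
    ‖A * resolvent A z‖ ≤ M + 1 := by
  have hM0 : 0 ≤ M := le_trans (by positivity) hM
  exact ContinuousLinearMap.opNorm_le_bound _ (by positivity) (norm_mul_resolvent_apply_le hz hM)

theorem norm_mul_resolvent_apply_le_mul_div (hz : z ∈ resolventSet 𝕜 A) (hz0 : z ≠ 0)
    (hM : ‖z‖ * ‖resolvent A z‖ ≤ M) {x : X} (hx : ‖x‖ ≤ 1) :
    ‖(A * resolvent A z) x‖ ≤ (2 * M + 1) * (‖A x‖ / (‖z‖ + ‖A x‖)) := by
  have hM0 : 0 ≤ M := le_trans (by positivity) hM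
  have h_decay : ‖z‖ * ‖(A * resolvent A z) x‖ ≤ M * ‖A x‖ :=
    norm_mul_norm_mul_resolvent_apply_le hz hM x
  have h_uniform : ‖(A * resolvent A z) x‖ ≤ M + 1 :=
    (norm_mul_resolvent_apply_le hz hM x).trans (mul_le_of_le_one_right (by positivity) hx)
  rw [← mul_div_assoc, le_div_iff₀ (by positivity)]
  calc ‖(A * resolvent A z) x‖ * (‖z‖ + ‖A x‖)
      = ‖z‖ * ‖(A * resolvent A z) x‖ + ‖(A * resolvent A z) x‖ * ‖A x‖ := by ring
    _ ≤ M * ‖A x‖ + (M + 1) * ‖A x‖ :=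
        add_le_add h_decay (mul_le_mul_of_nonneg_right h_uniform (norm_nonneg _))
    _ = (2 * M + 1) * ‖A x‖ := by ring

end Pointwise

theorem integrableOn_div_add {τ : Measure ℝ} {u : Set ℝ} (hu : MeasurableSet u)
    (hu0 : ∀ t ∈ u, 0 ≤ t) (hτ : τ u ≠ ⊤) {s : ℝ} (hs : 0 ≤ s) :
    IntegrableOn (fun t => s / (t + s)) u τ := by
  have hmeas : Measurable fun t : ℝ => s / (t + s) := by fun_prop
  refine .of_bound hτ.lt_top hmeas.aestronglyMeasurable 1
    (ae_restrict_of_forall_mem hu fun t ht => ?_)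
  have ht0 : 0 ≤ t := hu0 t ht
  rw [Real.norm_of_nonneg (by positivity)]
  exact div_le_one_of_le₀ (by linarith) (by positivity)

namespace MemV

variable {X : Type*} [NormedAddCommGroup X] [NormedSpace ℂ X] {b M t : ℝ} {A : X →L[ℂ] X}

theorem norm_mul_norm_resolvent_le (hA : MemV b M A) (ht : t ∈ Ioc 0 b) :
    ‖(t : ℂ)‖ * ‖resolvent A (t : ℂ)‖ ≤ M := by
  rw [Complex.norm_of_nonneg ht.1.le, ← le_div_iff₀' ht.1]
  exact (hA t ht).2

theorem norm_mul_resolvent_apply_le_mul_div (hA : MemV b M A) (ht : t ∈ Ioc 0 b) {x : X}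
    (hx : ‖x‖ ≤ 1) :
    ‖(A * resolvent A (t : ℂ)) x‖ ≤ (2 * M + 1) * (‖A x‖ / (t + ‖A x‖)) := by
  have hbound := _root_.norm_mul_resolvent_apply_le_mul_div (hA t ht).1
    (Complex.ofReal_ne_zero.2 ht.1.ne') (hA.norm_mul_norm_resolvent_le ht) hx
  rwa [Complex.norm_of_nonneg ht.1.le] at hbound

theorem integrableOn_mul_resolvent [CompleteSpace X] {τ : Measure ℝ} (hA : MemV b M A)
    (hτ : τ (Ioc 0 b) ≠ ⊤) :
    IntegrableOn (fun t : ℝ => A * resolvent A (t : ℂ)) (Ioc 0 b) τ := by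
  have hcont : ContinuousOn (fun t : ℝ => A * resolvent A (t : ℂ)) (Ioc 0 b) :=
    continuousOn_const.mul <| (continuousOn_resolvent A).comp
      Complex.continuous_ofReal.continuousOn fun t ht => (hA t ht).1
  refine .of_bound hτ.lt_top (hcont.aestronglyMeasurable measurableSet_Ioc) (M + 1) ?_
  exact ae_restrict_of_forall_mem measurableSet_Ioc fun t ht =>
    norm_mul_resolvent_le (hA t ht).1 (hA.norm_mul_norm_resolvent_le ht)

end MemV

theorem moment_inequality_general {X : Type*} [NormedAddCommGroup X] [NormedSpace ℂ X]
    [CompleteSpace X] {b M : ℝ} {τ : Measure ℝ} (hτ : τ (Ioc 0 b) ≠ ⊤) {A : X →L[ℂ] X}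
    (hA : MemV b M A) {x : X} (hx : ‖x‖ ≤ 1) :
    ‖fOp τ b A x‖ ≤ -((2 * M + 1) * ∫ t in Ioc (0 : ℝ) b, (-‖A x‖) / (t + ‖A x‖) ∂τ) :=
  calc ‖fOp τ b A x‖
      = ‖∫ t in Ioc (0 : ℝ) b, (A * resolvent A (t : ℂ)) x ∂τ‖ := by
        rw [fOp, ContinuousLinearMap.integral_apply (hA.integrableOn_mul_resolvent hτ)]
    _ ≤ ∫ t in Ioc (0 : ℝ) b, (2 * M + 1) * (‖A x‖ / (t + ‖A x‖)) ∂τ :=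
        norm_integral_le_of_norm_le
          ((integrableOn_div_add measurableSet_Ioc (fun _ ht => ht.1.le) hτ
            (norm_nonneg (A x))).const_mul _)
          (ae_restrict_of_forall_mem measurableSet_Ioc fun _ ht =>
            hA.norm_mul_resolvent_apply_le_mul_div ht hx)
    _ = -((2 * M + 1) * ∫ t in Ioc (0 : ℝ) b, (-‖A x‖) / (t + ‖A x‖) ∂τ) := by
        simp only [neg_div, integral_neg, integral_const_mul, mul_neg, neg_neg]

/-- Corollary 1 (moment inequality): for `A ∈ V_{(0,b]}(X)` and a unit vector `x`,
`‖f(A)x‖ ≤ −(2M_A + 1)·f(−‖Ax‖)`. -/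
theorem moment_inequality {X : Type*} [NormedAddCommGroup X] [NormedSpace ℂ X]
    [CompleteSpace X] (b : ℝ) (hb : 0 < b) (τ : Measure ℝ) [IsFiniteMeasure τ]
    (hτ : IntegrableOn (fun t : ℝ => 1 / t) (Ioc 0 b) τ)
    (MA : ℝ) (hMA : 0 < MA) (A : X →L[ℂ] X) (hA : MemV b MA A) :
    ∀ x : X, ‖x‖ = 1 →
      ‖fOp τ b A x‖ ≤
        -((2 * MA + 1) * ∫ t in Ioc (0 : ℝ) b, (-‖A x‖) / (t + ‖A x‖) ∂τ) :=
  fun _ hx => moment_inequality_general (measure_ne_top τ _) hA hx.le
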